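/- Let H̄: ℝ³∖{0} → S₀ be the constant-norm hedgehog H̄(x) = √(3/2)·( (x/|x|)⊗(x/|x|) − I/3 ). Then: (a) under the identification ι* of S₀ with ℝ⊕ℂ⊕ℂ, ι*(H̄(x)) = ω_{√3,√3}(x/|x|) for every x ≠ 0, where ω_{√3,√3} is the member of the explicit family of equivariant harmonic spheres with parameters μ₁ = μ₂ = √3 (the Veronese map); and (b) H̄ is unstable with respect to S¹-equivariant perturbations: there exists an S¹-equivariant X ∈ C_c^∞(ℝ³∖{0}; ℝ⊕ℂ⊕ℂ) with δ²E₀(ι*∘H̄)[X] < 0. -/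

import Mathlib

noncomputable section

open MeasureTheory Matrix
open scoped Classical

/-- The space of 3 × 3 real matrices. -/
abbrev M3 : Type := Matrix (Fin 3) (Fin 3) ℝ

/-- Frobenius pairing P : Q = tr(PQ). -/
def frob (A B : M3) : ℝ := (A * B).trace

def e0m : M3 := (Real.sqrt 6)⁻¹ • !![(-1 : ℝ), 0, 0; 0, -1, 0; 0, 0, 2]

def e11m : M3 := (Real.sqrt 2)⁻¹ • !![(0 : ℝ), 0, 1; 0, 0, 0; 1, 0, 0]

def e12m : M3 := (Real.sqrt 2)⁻¹ • !![(0 : ℝ), 0, 0; 0, 0, 1; 0, 1, 0]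

def e21m : M3 := (Real.sqrt 2)⁻¹ • !![(1 : ℝ), 0, 0; 0, -1, 0; 0, 0, 0]

def e22m : M3 := (Real.sqrt 2)⁻¹ • !![(0 : ℝ), 1, 0; 1, 0, 0; 0, 0, 0]

/-- Rotation by angle α about the x₃-axis. -/
def rotM (α : ℝ) : M3 :=
  !![Real.cos α, -Real.sin α, 0; Real.sin α, Real.cos α, 0; 0, 0, 1]

/-- The induced S¹-action R · A = R A Rᵀ on matrices. -/
def actM (α : ℝ) (A : M3) : M3 := rotM α * A * (rotM α)ᵀ

/-- S₀: symmetric traceless 3 × 3 real matrices. -/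
def S0set : Set M3 := {A : M3 | A.IsSymm ∧ A.trace = 0}

def basis5 : Fin 5 → M3 := ![e0m, e11m, e12m, e21m, e22m]

def L0m : Submodule ℝ M3 := Submodule.span ℝ {e0m}

def L1m : Submodule ℝ M3 := Submodule.span ℝ {e11m, e12m}

def L2m : Submodule ℝ M3 := Submodule.span ℝ {e21m, e22m}

def iota0 (A : M3) : ℝ := frob A e0m

def iota1 (A : M3) : ℂ := (frob A e11m : ℂ) + (frob A e12m : ℂ) * Complex.I

def iota2 (A : M3) : ℂ := (frob A e21m : ℂ) + (frob A e22m : ℂ) * Complex.I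

abbrev E3 : Type := EuclideanSpace ℝ (Fin 3)

abbrev V5 : Type := ℝ × ℂ × ℂ

/-- Squared Euclidean norm on ℝ ⊕ ℂ ⊕ ℂ. -/
def nsq (p : V5) : ℝ := p.1 ^ 2 + Complex.normSq p.2.1 + Complex.normSq p.2.2

/-- Real inner product on ℝ ⊕ ℂ ⊕ ℂ. -/
def vdot (p q : V5) : ℝ :=
  p.1 * q.1 + (p.2.1 * (starRingEnd ℂ) q.2.1).re + (p.2.2 * (starRingEnd ℂ) q.2.2).re

/-- The circle action R_α · (t, ζ₁, ζ₂) = (t, e^{iα}ζ₁, e^{2iα}ζ₂) on ℝ ⊕ ℂ ⊕ ℂ. -/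
def circAct (α : ℝ) (p : V5) : V5 :=
  (p.1, Complex.exp (Complex.I * (α : ℂ)) * p.2.1,
    Complex.exp (2 * Complex.I * (α : ℂ)) * p.2.2)

/-- Rotation of ℝ³ by angle α about the x₃-axis. -/
def rot3 (α : ℝ) (x : E3) : E3 :=
  EuclideanSpace.single (0 : Fin 3) (Real.cos α * x 0 - Real.sin α * x 1) +
    EuclideanSpace.single (1 : Fin 3) (Real.sin α * x 0 + Real.cos α * x 1) +
    EuclideanSpace.single (2 : Fin 3) (x 2)

/-- The unit sphere S² ⊂ ℝ³. -/
def sphere2 : Set E3 := Metric.sphere (0 : E3) 1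

def northPole : E3 := EuclideanSpace.single (2 : Fin 3) (1 : ℝ)

def southPole : E3 := EuclideanSpace.single (2 : Fin 3) (-1 : ℝ)

/-- Degree-zero homogeneous extension of a map defined on the sphere. -/
def homExt (ω : E3 → V5) : E3 → V5 := fun x => ω (‖x‖⁻¹ • x)

def homExtR (g : E3 → ℝ) : E3 → ℝ := fun x => g (‖x‖⁻¹ • x)

/-- Squared Euclidean norm of the differential. -/
def gradSq (f : E3 → V5) (x : E3) : ℝ :=
  ∑ i : Fin 3, nsq (fderiv ℝ f x (EuclideanSpace.single i (1 : ℝ)))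

def gradSqR (f : E3 → ℝ) (x : E3) : ℝ :=
  ∑ i : Fin 3, fderiv ℝ f x (EuclideanSpace.single i (1 : ℝ)) ^ 2

/-- Componentwise Euclidean Laplacian. -/
def lap (f : E3 → V5) (x : E3) : V5 :=
  ∑ i : Fin 3,
    fderiv ℝ (fun y => fderiv ℝ f y (EuclideanSpace.single i (1 : ℝ))) x
      (EuclideanSpace.single i (1 : ℝ))

/-- ω : S² → S⁴ is a (smooth) harmonic sphere: it maps the sphere into the unit
sphere of ℝ ⊕ ℂ ⊕ ℂ, its degree-zero homogeneous extension Q is smooth away from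
the origin, and ΔQ + |∇Q|²Q = 0 on ℝ³ ∖ {0}. -/
def IsHarmonicSphere (ω : E3 → V5) : Prop :=
  (∀ x ∈ sphere2, nsq (ω x) = 1) ∧
    ContDiffOn ℝ (⊤ : ℕ∞) (homExt ω) {(0 : E3)}ᶜ ∧
    ∀ x : E3, x ≠ 0 → lap (homExt ω) x + gradSq (homExt ω) x • homExt ω x = 0

/-- S¹-equivariance of a sphere map. -/
def EquivariantS (ω : E3 → V5) : Prop :=
  ∀ α : ℝ, ∀ x ∈ sphere2, ω (rot3 α x) = circAct α (ω x)

/-- S¹-equivariance of a vector field on ℝ³. -/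
def EquivariantV (X : E3 → V5) : Prop :=
  ∀ (α : ℝ) (x : E3), X (rot3 α x) = circAct α (X x)

/-- Tangential part X_T = X - (w·X)w. -/
def tangPart (w X : E3 → V5) : E3 → V5 := fun x => X x - vdot (w x) (X x) • w x

/-- Second variation δ²E₀(w)[X] = ∫ (|∇X_T|² - |∇w|²|X_T|²). -/
def secondVar (w X : E3 → V5) : ℝ :=
  ∫ x : E3, (gradSq (tangPart w X) x - gradSq w x * nsq (tangPart w X x))

/-- Stability of a tangent map within the S¹-equivariant class. -/
def IsStable (w : E3 → V5) : Prop :=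
  ∀ X : E3 → V5, ContDiff ℝ (⊤ : ℕ∞) X → HasCompactSupport X → EquivariantV X →
    0 ≤ secondVar w X

def conj' (z : ℂ) : ℂ := (starRingEnd ℂ) z

/-- The twistor fibration, in homogeneous coordinates on ℂ⁴ ∖ {0}. -/
def tau4 (w0 w1 w2 w3 : ℂ) : V5 :=
  ((Complex.normSq w0 + Complex.normSq w3 - Complex.normSq w1 - Complex.normSq w2) /
      (Complex.normSq w0 + Complex.normSq w1 + Complex.normSq w2 + Complex.normSq w3),
    2 * (conj' w0 * w1 + conj' w2 * w3) /
      ((Complex.normSq w0 + Complex.normSq w1 + Complex.normSq w2 + Complex.normSq w3 : ℝ) : ℂ),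
    2 * (conj' w0 * w2 - conj' w1 * w3) /
      ((Complex.normSq w0 + Complex.normSq w1 + Complex.normSq w2 + Complex.normSq w3 : ℝ) : ℂ))

/-- Inverse stereographic projection ℂ → S² (from the south pole). -/
def stInv (z : ℂ) : E3 :=
  EuclideanSpace.single (0 : Fin 3) (2 * z.re / (1 + Complex.normSq z)) +
    EuclideanSpace.single (1 : Fin 3) (2 * z.im / (1 + Complex.normSq z)) +
    EuclideanSpace.single (2 : Fin 3) ((1 - Complex.normSq z) / (1 + Complex.normSq z))

/-- Equatorial embedding ω_eq^{(1)}(x) = (x₃, x₁ + ix₂, 0). -/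
def omegaEq1 (x : E3) : V5 := (x 2, (x 0 : ℂ) + (x 1 : ℂ) * Complex.I, 0)

/-- Equatorial embedding ω_eq^{(2)}(x) = (x₃, 0, x₁ + ix₂). -/
def omegaEq2 (x : E3) : V5 := (x 2, 0, (x 0 : ℂ) + (x 1 : ℂ) * Complex.I)

/-- The horizontal algebraic curve composed with the twistor fibration. -/
def liftCurve (μ1 μ2 z0 z1 : ℂ) : V5 :=
  tau4 (z0 ^ 3) (μ1 * z0 ^ 2 * z1) (μ2 * z0 * z1 ^ 2) (-(μ1 * μ2 / 3) * z1 ^ 3)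

/-- The explicit two-parameter family ω_{μ₁,μ₂} of equivariant harmonic spheres,
as a map defined on S² via the identification [z₀, z₁] ↦ σ₂⁻¹(z₁/z₀). -/
def omegaFam (μ1 μ2 : ℂ) (x : E3) : V5 :=
  if x = southPole then
    if μ1 = 0 ∧ μ2 = 0 then ((1 : ℝ), 0, 0)
    else if μ1 ≠ 0 ∧ μ2 ≠ 0 then liftCurve μ1 μ2 0 1
    else ((-1 : ℝ), 0, 0)
  else liftCurve μ1 μ2 ((1 + x 2 : ℝ) : ℂ) ((x 0 : ℂ) + (x 1 : ℂ) * Complex.I)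

/-- Wirtinger derivative ∂f/∂z̄ = ½(∂_{x₁} + i ∂_{x₂})f. -/
def wd (f : ℂ → ℂ) (z : ℂ) : ℂ :=
  (1 / 2 : ℂ) * (fderiv ℝ f z 1 + Complex.I * fderiv ℝ f z Complex.I)

/-- Surface (2-dimensional Hausdorff) measure on ℝ³. -/
def surf : Measure E3 := Measure.hausdorffMeasure 2

/-- The constant-norm hedgehog H̄(x) = √(3/2)((x/|x|) ⊗ (x/|x|) − I/3). -/
def hedge (x : E3) : M3 :=
  Real.sqrt (3 / 2) •
    (Matrix.vecMulVec (fun i => ‖x‖⁻¹ * x i) (fun i => ‖x‖⁻¹ * x i) - (3 : ℝ)⁻¹ • (1 : M3))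

/-- The identification ι* : S₀ → ℝ ⊕ ℂ ⊕ ℂ. -/
def iotaStar (A : M3) : V5 := (iota0 A, iota1 A, iota2 A)

/-!
Under `ι*` the hedgehog becomes the Veronese map `w`, a quadratic form in `x / |x|`. Composed with
the Hopf map, this form is the lifted curve with `μ₁ = μ₂ = √3`, because for these parameters the
denominator is `(|z₀|² + |z₁|²)³` and a common factor cancels.

The Veronese map is homothetic, with `|∇w|² = 6 / |x|²`, and its component along the fixed line
`ℝ e₀` of the circle action is the Legendre polynomial `P₂` of the direction cosine. For the
equivariant field `η(|x|) e₀`, averaging `P₂²` and `|∇P₂|²` over spheres turns the second variation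
into a positive multiple of `∫ (η'(r)² - 3 η(r)² / r²) r² dr`. This can be made negative, since the
optimal constant in Hardy's inequality is `1/4 < 3`.
-/

section DirectionCosines

open scoped RealInnerProductSpace

variable {E : Type*} [NormedAddCommGroup E] [InnerProductSpace ℝ E]

/-- The cosine of the angle between `x` and the unit vector `u`, with value `0` at `x = 0`. -/
def dirCos (u x : E) : ℝ := ⟪u, x⟫ / ‖x‖

lemma abs_dirCos_le (u x : E) : |dirCos u x| ≤ ‖u‖ := by
  rw [dirCos, abs_div, abs_norm]
  exact div_le_of_le_mul₀ (norm_nonneg x) (norm_nonneg u) (abs_real_inner_le_norm u x)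

lemma sum_dirCos_sq {ι : Type*} [Fintype ι] (b : OrthonormalBasis ι ℝ E) {x : E} (hx : x ≠ 0) :
    ∑ i, dirCos (b i) x ^ 2 = 1 := by
  simp only [dirCos, div_pow]
  rw [← Finset.sum_div, b.sum_sq_inner_right, div_self (by simpa using hx)]

variable [FiniteDimensional ℝ E] [MeasurableSpace E] [BorelSpace E]

lemma integrable_mul_dirCos_pow {f : E → ℝ} (hf : Integrable f) (u : E) (k : ℕ) :
    Integrable fun x => f x * dirCos u x ^ k := by
  refine hf.mul_bdd (c := ‖u‖ ^ k) ?_ (.of_forall fun x => ?_)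
  · exact ((Measurable.div (by fun_prop) measurable_norm).pow_const k).aestronglyMeasurable
  · rw [norm_pow]
    exact pow_le_pow_left₀ (norm_nonneg _) (abs_dirCos_le u x) k

lemma integrable_mul_dirCos_quartic {f : E → ℝ} (hf : Integrable f) (u : E) (a₀ a₂ a₄ : ℝ) :
    Integrable fun x => f x * (a₀ + a₂ * dirCos u x ^ 2 + a₄ * dirCos u x ^ 4) := by
  refine (((hf.const_mul a₀).add ((integrable_mul_dirCos_pow hf u 2).const_mul a₂)).add
    ((integrable_mul_dirCos_pow hf u 4).const_mul a₄)).congr (.of_forall fun x => ?_)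
  simp only [Pi.add_apply]
  ring

lemma integral_norm_inner_eq_of_norm_eq {F : Type*} [NormedAddCommGroup F] [NormedSpace ℝ F]
    (G : ℝ → ℝ → F) {u v : E} (huv : ‖u‖ = ‖v‖) :
    ∫ x : E, G ‖x‖ ⟪u, x⟫ = ∫ x : E, G ‖x‖ ⟪v, x⟫ := by
  set e : E ≃ₗᵢ[ℝ] E := (ℝ ∙ (u - v))ᗮ.reflection
  have he : e u = v := Submodule.reflection_sub huv
  rw [← e.measurePreserving.integral_comp e.toHomeomorph.measurableEmbedding
    (fun x => G ‖x‖ ⟪v, x⟫)]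
  simp only [← he, e.norm_map, e.inner_map_map]

lemma integral_radial_mul_dirCos_pow_eq (f : ℝ → ℝ) (k : ℕ) {u v : E} (huv : ‖u‖ = ‖v‖) :
    ∫ x : E, f ‖x‖ * dirCos u x ^ k = ∫ x : E, f ‖x‖ * dirCos v x ^ k :=
  integral_norm_inner_eq_of_norm_eq (fun r t => f r * (t / r) ^ k) huv

lemma sum_integral_mul_dirCos_sq {ι : Type*} [Fintype ι] [Nontrivial E]
    (b : OrthonormalBasis ι ℝ E) {f : E → ℝ} (hf : Integrable f) :
    ∑ i, ∫ x, f x * dirCos (b i) x ^ 2 = ∫ x, f x := by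
  rw [← integral_finsetSum _ fun i _ => integrable_mul_dirCos_pow hf (b i) 2]
  refine integral_congr_ae ?_
  filter_upwards [Measure.ae_ne volume (0 : E)] with x hx
  rw [← Finset.mul_sum, sum_dirCos_sq b hx, mul_one]

variable {f : ℝ → ℝ} (hf : Integrable fun x : E => f ‖x‖)
include hf

lemma integral_radial_mul_dirCos_sq {ι : Type*} [Fintype ι] (b : OrthonormalBasis ι ℝ E) (i : ι) :
    ∫ x : E, f ‖x‖ * dirCos (b i) x ^ 2 = (∫ x : E, f ‖x‖) / Fintype.card ι := by
  have : Nontrivial E := ⟨b i, 0, b.orthonormal.ne_zero i⟩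
  have : Nonempty ι := ⟨i⟩
  have hsymm (j : ι) : ∫ x : E, f ‖x‖ * dirCos (b j) x ^ 2 = ∫ x : E, f ‖x‖ * dirCos (b i) x ^ 2 :=
    integral_radial_mul_dirCos_pow_eq f 2 (by simp)
  rw [← sum_integral_mul_dirCos_sq b hf, Finset.sum_congr rfl fun j _ => hsymm j]
  simp

/-- The rotation taking `u, v` to `(u ± v) / √2` maps `⟪u, x⟫⁴ + ⟪v, x⟫⁴` to half of
`⟪u, x⟫⁴ + 6 ⟪u, x⟫² ⟪v, x⟫² + ⟪v, x⟫⁴`. -/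
lemma integral_radial_mul_dirCos_pow_four_eq_three_mul {u v : E} (hu : ‖u‖ = 1) (hv : ‖v‖ = 1)
    (huv : ⟪u, v⟫ = 0) :
    ∫ x : E, f ‖x‖ * dirCos u x ^ 4 =
      3 * ∫ x : E, f ‖x‖ * dirCos u x ^ 2 * dirCos v x ^ 2 := by
  have hsqrt : (√2)⁻¹ ^ 2 = (2 : ℝ)⁻¹ := by rw [inv_pow, Real.sq_sqrt zero_le_two]
  have hadd : ‖(√2)⁻¹ • (u + v)‖ = ‖u‖ := by
    rw [← sq_eq_sq₀ (norm_nonneg _) (norm_nonneg _), norm_smul, mul_pow, norm_add_sq_real, huv,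
      hu, hv, Real.norm_eq_abs, sq_abs, hsqrt]
    norm_num
  have hsub : ‖(√2)⁻¹ • (u - v)‖ = ‖u‖ := by
    rw [← sq_eq_sq₀ (norm_nonneg _) (norm_nonneg _), norm_smul, mul_pow, norm_sub_sq_real, huv,
      hu, hv, Real.norm_eq_abs, sq_abs, hsqrt]
    norm_num
  have hpoint (x : E) : f ‖x‖ * dirCos ((√2)⁻¹ • (u + v)) x ^ 4 +
      f ‖x‖ * dirCos ((√2)⁻¹ • (u - v)) x ^ 4 =
      1 / 2 * (f ‖x‖ * dirCos u x ^ 4 + f ‖x‖ * dirCos v x ^ 4) +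
        3 * (f ‖x‖ * dirCos u x ^ 2 * dirCos v x ^ 2) := by
    simp only [dirCos, real_inner_smul_left, inner_add_left, inner_sub_left]
    have hsqrt4 : (√2)⁻¹ ^ 4 = (4 : ℝ)⁻¹ := by rw [pow_mul _ 2 2, hsqrt]; norm_num
    simp only [div_pow, mul_pow, hsqrt4]
    ring
  have h4 (w : E) := integrable_mul_dirCos_pow hf w 4
  have h44 : Integrable fun x : E => f ‖x‖ * dirCos u x ^ 4 + f ‖x‖ * dirCos v x ^ 4 :=
    (h4 u).add (h4 v)
  have h22 := integrable_mul_dirCos_pow (integrable_mul_dirCos_pow hf u 2) v 2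
  have hinteg := integral_congr_ae (μ := volume) (.of_forall hpoint)
  rw [integral_add (h4 _) (h4 _), integral_add (h44.const_mul _) (h22.const_mul _),
    integral_const_mul, integral_const_mul, integral_add (h4 u) (h4 v),
    integral_radial_mul_dirCos_pow_eq f 4 hadd, integral_radial_mul_dirCos_pow_eq f 4 hsub,
    integral_radial_mul_dirCos_pow_eq f 4 (hv.trans hu.symm)] at hinteg
  linarith

lemma integral_radial_mul_dirCos_pow_four {ι : Type*} [Fintype ι] (b : OrthonormalBasis ι ℝ E)
    (i : ι) :
    ∫ x : E, f ‖x‖ * dirCos (b i) x ^ 4 =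
      3 * (∫ x : E, f ‖x‖) / (Fintype.card ι * (Fintype.card ι + 2)) := by
  have : Nontrivial E := ⟨b i, 0, b.orthonormal.ne_zero i⟩
  have : Nonempty ι := ⟨i⟩
  have hcard : (Fintype.card ι : ℝ) ≠ 0 := by simp
  have hsum := sum_integral_mul_dirCos_sq b (integrable_mul_dirCos_pow hf (b i) 2)
  have hdiag : ∫ x : E, f ‖x‖ * dirCos (b i) x ^ 2 * dirCos (b i) x ^ 2 =
      ∫ x : E, f ‖x‖ * dirCos (b i) x ^ 4 := by
    congr! 2 with x
    ring
  have hoff : ∀ j ∈ Finset.univ.erase i, ∫ x : E, f ‖x‖ * dirCos (b i) x ^ 2 * dirCos (b j) x ^ 2 =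
      (∫ x : E, f ‖x‖ * dirCos (b i) x ^ 4) / 3 := fun j hj => by
    rw [integral_radial_mul_dirCos_pow_four_eq_three_mul hf (b.norm_eq_one i) (b.norm_eq_one j)
      (b.inner_eq_zero (Finset.ne_of_mem_erase hj).symm)]
    ring
  rw [← Finset.add_sum_erase _ _ (Finset.mem_univ i), hdiag, Finset.sum_congr rfl hoff,
    Finset.sum_const, Finset.card_erase_of_mem (Finset.mem_univ i), Finset.card_univ, nsmul_eq_mul,
    Nat.cast_pred Fintype.card_pos, integral_radial_mul_dirCos_sq hf, eq_div_iff hcard] at hsum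
  rw [eq_div_iff (by positivity)]
  linarith

lemma integral_radial_mul_dirCos_quartic {ι : Type*} [Fintype ι] (b : OrthonormalBasis ι ℝ E)
    (i : ι) (a₀ a₂ a₄ : ℝ) :
    ∫ x : E, f ‖x‖ * (a₀ + a₂ * dirCos (b i) x ^ 2 + a₄ * dirCos (b i) x ^ 4) =
      (a₀ + a₂ / Fintype.card ι + 3 * a₄ / (Fintype.card ι * (Fintype.card ι + 2))) *
        ∫ x : E, f ‖x‖ := by
  have hcos (k : ℕ) := integrable_mul_dirCos_pow hf (b i) k
  have h02 : Integrable fun x : E => a₀ * f ‖x‖ + a₂ * (f ‖x‖ * dirCos (b i) x ^ 2) :=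
    (hf.const_mul _).add ((hcos 2).const_mul _)
  calc ∫ x : E, f ‖x‖ * (a₀ + a₂ * dirCos (b i) x ^ 2 + a₄ * dirCos (b i) x ^ 4)
      = ∫ x : E, (a₀ * f ‖x‖ + a₂ * (f ‖x‖ * dirCos (b i) x ^ 2)) +
          a₄ * (f ‖x‖ * dirCos (b i) x ^ 4) := by congr! 2 with x; ring
    _ = a₀ * (∫ x : E, f ‖x‖) + a₂ * (∫ x : E, f ‖x‖ * dirCos (b i) x ^ 2) +
          a₄ * ∫ x : E, f ‖x‖ * dirCos (b i) x ^ 4 := by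
      rw [integral_add h02 ((hcos 4).const_mul _),
        integral_add (hf.const_mul _) ((hcos 2).const_mul _), integral_const_mul,
        integral_const_mul, integral_const_mul]
    _ = _ := by
      rw [integral_radial_mul_dirCos_sq hf, integral_radial_mul_dirCos_pow_four hf]
      ring

end DirectionCosines

section LogRadial

open Filter Topology

variable {E F : Type*} [NormedAddCommGroup E] [NormedAddCommGroup F]

lemma comp_log_norm_eventuallyEq_zero {φ : ℝ → F} (hφ : HasCompactSupport φ) (hφ0 : φ 0 = 0) :
    (fun x : E => φ (Real.log ‖x‖)) =ᶠ[𝓝 0] 0 := by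
  have hlog : Tendsto (fun x : E => Real.log ‖x‖) (𝓝[≠] 0) (coclosedCompact ℝ) := by
    rw [coclosedCompact_eq_cocompact]
    exact (Real.tendsto_log_nhdsGT_zero.comp tendsto_norm_nhdsNE_zero).mono_right
      atBot_le_cocompact
  have hpunctured := hlog.eventually (hasCompactSupport_iff_eventuallyEq.1 hφ)
  rw [eventually_nhdsWithin_iff] at hpunctured
  filter_upwards [hpunctured] with x hx
  by_cases h : x = 0
  · simp [h, hφ0]
  · exact hx h

lemma hasCompactSupport_comp_log_norm [ProperSpace E] {φ : ℝ → F} (hφ : HasCompactSupport φ) :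
    HasCompactSupport fun x : E => φ (Real.log ‖x‖) := by
  rw [hasCompactSupport_iff_eventuallyEq] at hφ ⊢
  rw [coclosedCompact_eq_cocompact] at hφ ⊢
  exact ((Real.tendsto_log_atTop.comp tendsto_norm_cocompact_atTop).mono_right
    atTop_le_cocompact).eventually hφ

variable [InnerProductSpace ℝ E] [NormedSpace ℝ F]

lemma contDiff_comp_log_norm {n : WithTop ℕ∞} {φ : ℝ → F} (hφ : ContDiff ℝ n φ)
    (hsupp : HasCompactSupport φ) (hφ0 : φ 0 = 0) :
    ContDiff ℝ n fun x : E => φ (Real.log ‖x‖) := by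
  rw [contDiff_iff_contDiffAt]
  intro x
  by_cases hx : x = 0
  · exact hx ▸ contDiffAt_const.congr_of_eventuallyEq (comp_log_norm_eventuallyEq_zero hsupp hφ0)
  · exact hφ.contDiffAt.comp x ((contDiffAt_norm ℝ hx).log (norm_ne_zero_iff.2 hx))

lemma integrable_comp_log_norm [FiniteDimensional ℝ E] [MeasurableSpace E] [BorelSpace E]
    {φ : ℝ → F} (hφ : Continuous φ) (hsupp : HasCompactSupport φ) (hφ0 : φ 0 = 0) :
    Integrable fun x : E => φ (Real.log ‖x‖) := by
  have := FiniteDimensional.proper_real E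
  rw [← contDiff_zero (𝕜 := ℝ)] at hφ
  exact (contDiff_comp_log_norm hφ hsupp hφ0).continuous.integrable_of_hasCompactSupport
    (hasCompactSupport_comp_log_norm hsupp)

lemma hasFDerivAt_log_norm {x : E} (hx : x ≠ 0) :
    HasFDerivAt (fun y : E => Real.log ‖y‖) ((‖x‖ ^ 2)⁻¹ • innerSL ℝ x) x := by
  have hsq : ‖x‖ ^ 2 ≠ 0 := by simpa using hx
  have h := (((hasFDerivAt_id x).norm_sq).log hsq).const_mul (1 / 2)
  refine (h.congr_of_eventuallyEq (.of_forall fun y => ?_)).congr_fderiv ?_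
  · simp [Real.log_pow]
  · ext v
    simp only [one_div, id_eq, ContinuousLinearMap.comp_id, _root_.smul_apply, coe_innerSL_apply,
      nsmul_eq_mul, Nat.cast_ofNat, smul_eq_mul]
    ring

end LogRadial

lemma integral_comp_log_norm {E F : Type*} [NormedAddCommGroup E] [NormedSpace ℝ E]
    [MeasurableSpace E] [BorelSpace E] [FiniteDimensional ℝ E] [Nontrivial E]
    [NormedAddCommGroup F] [NormedSpace ℝ F] (μ : Measure E) [μ.IsAddHaarMeasure] (φ : ℝ → F) :
    ∫ x, φ (Real.log ‖x‖) ∂μ = (Module.finrank ℝ E * μ.real (Metric.ball 0 1)) •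
      ∫ s : ℝ, Real.exp (Module.finrank ℝ E * s) • φ s := by
  have hpolar := integral_fun_norm_addHaar μ fun r => φ (Real.log r)
  have hexp := integral_image_eq_integral_abs_deriv_smul (f := Real.exp) MeasurableSet.univ
    (fun s _ => (Real.hasDerivAt_exp s).hasDerivWithinAt) Real.exp_injective.injOn
    fun r => r ^ (Module.finrank ℝ E - 1) • φ (Real.log r)
  rw [Set.image_univ, Real.range_exp] at hexp
  have hweight (s : ℝ) : |Real.exp s| • Real.exp s ^ (Module.finrank ℝ E - 1) •
      φ (Real.log (Real.exp s)) = Real.exp (Module.finrank ℝ E * s) • φ s := by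
    rw [Real.abs_exp, Real.log_exp, smul_smul, mul_pow_sub_one Module.finrank_pos.ne',
      Real.exp_nat_mul]
  simp only [hweight, Measure.restrict_univ] at hexp
  rw [hpolar, hexp, mul_smul, Nat.cast_smul_eq_nsmul]

section LogRadialWeighted

variable {E : Type*} [NormedAddCommGroup E] {φ : ℝ → ℝ}

lemma comp_log_norm_div_norm_pow (hφ0 : φ 0 = 0) (k : ℕ) (x : E) :
    φ (Real.log ‖x‖) / ‖x‖ ^ k = Real.exp (-(k * Real.log ‖x‖)) * φ (Real.log ‖x‖) := by
  by_cases hx : x = 0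
  · simp [hx, hφ0]
  · rw [Real.exp_neg, Real.exp_nat_mul, Real.exp_log (norm_pos_iff.2 hx), inv_mul_eq_div]

lemma integrable_comp_log_norm_div_norm_pow [InnerProductSpace ℝ E] [FiniteDimensional ℝ E]
    [MeasurableSpace E] [BorelSpace E] (hφ : Continuous φ) (hsupp : HasCompactSupport φ)
    (hφ0 : φ 0 = 0) (k : ℕ) :
    Integrable fun x : E => φ (Real.log ‖x‖) / ‖x‖ ^ k := by
  simp only [comp_log_norm_div_norm_pow hφ0]
  exact integrable_comp_log_norm (φ := fun s => Real.exp (-(k * s)) * φ s) (by fun_prop)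
    hsupp.mul_left (by simp [hφ0])

lemma integral_comp_log_norm_div_norm_pow [NormedSpace ℝ E] [MeasurableSpace E] [BorelSpace E]
    [FiniteDimensional ℝ E] [Nontrivial E] (μ : Measure E) [μ.IsAddHaarMeasure] (hφ0 : φ 0 = 0)
    (k : ℕ) :
    ∫ x, φ (Real.log ‖x‖) / ‖x‖ ^ k ∂μ = Module.finrank ℝ E * μ.real (Metric.ball 0 1) *
      ∫ s : ℝ, Real.exp ((Module.finrank ℝ E - k) * s) * φ s := by
  simp only [comp_log_norm_div_norm_pow hφ0]
  have hweight (s : ℝ) : Real.exp (Module.finrank ℝ E * s) * (Real.exp (-(k * s)) * φ s) =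
      Real.exp ((Module.finrank ℝ E - k) * s) * φ s := by
    rw [← mul_assoc, ← Real.exp_add, sub_mul, sub_eq_add_neg]
  simp only [integral_comp_log_norm μ fun s => Real.exp (-(k * s)) * φ s, smul_eq_mul, hweight]

end LogRadialWeighted

section Hardy

open Filter Topology

/-- Dilations of `β`, rescaled by the virtual extremal `e^{-s/2} = r^{-1/2}` (`r = e^s`) of Hardy's
inequality. They nearly saturate the inequality as `L → ∞`. -/
def hardyProfile (β : ℝ → ℝ) (L s : ℝ) : ℝ := Real.exp (-s / 2) * β (s / L)

variable {β : ℝ → ℝ} {L : ℝ}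

lemma contDiff_hardyProfile {n : WithTop ℕ∞} (hβ : ContDiff ℝ n β) (L : ℝ) :
    ContDiff ℝ n (hardyProfile β L) := by
  unfold hardyProfile
  fun_prop

lemma hasCompactSupport_hardyProfile (hβ : HasCompactSupport β) (hL : L ≠ 0) :
    HasCompactSupport (hardyProfile β L) := by
  have hdil : HasCompactSupport fun s => β (s / L) := by
    simpa only [smul_eq_mul, div_eq_inv_mul] using hβ.comp_smul (inv_ne_zero hL)
  exact hdil.mul_left

lemma zero_notMem_tsupport_hardyProfile (hβ : 0 ∉ tsupport β) (L : ℝ) :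
    0 ∉ tsupport (hardyProfile β L) := by
  rw [notMem_tsupport_iff_eventuallyEq] at hβ ⊢
  have hdil : Tendsto (fun s : ℝ => s / L) (𝓝 0) (𝓝 0) := by
    simpa using (continuous_id.div_const L).tendsto 0
  filter_upwards [hdil.eventually hβ] with s hs
  simp only [hardyProfile, hs, Pi.zero_apply, mul_zero]

lemma deriv_hardyProfile (hβ : Differentiable ℝ β) (L s : ℝ) :
    deriv (hardyProfile β L) s = Real.exp (-s / 2) * (deriv β (s / L) / L - β (s / L) / 2) := by
  have hexp := ((hasDerivAt_neg s).div_const 2).exp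
  have hdil := (hβ (s / L)).hasDerivAt.comp s ((hasDerivAt_id' s).div_const L)
  refine ((hexp.mul hdil).congr_deriv ?_).deriv
  simp only [Function.comp_apply]
  ring

lemma exp_mul_exp_neg_half_mul_sq (s a : ℝ) :
    Real.exp s * (Real.exp (-s / 2) * a) ^ 2 = a ^ 2 := by
  rw [mul_pow, ← mul_assoc, ← Real.exp_nat_mul, ← Real.exp_add]
  simp [mul_div_cancel₀]

lemma integral_exp_mul_hardyProfile_sq (β : ℝ → ℝ) (hL : 0 < L) :
    ∫ s, Real.exp s * hardyProfile β L s ^ 2 = L * ∫ s, β s ^ 2 := by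
  simp only [hardyProfile, exp_mul_exp_neg_half_mul_sq]
  rw [Measure.integral_comp_div (fun t => β t ^ 2), abs_of_pos hL, smul_eq_mul]

lemma integral_mul_deriv_self_eq_zero (hβ : ContDiff ℝ 1 β) (hsupp : HasCompactSupport β) :
    ∫ s, β s * deriv β s = 0 := by
  have hβ' := hβ.continuous_deriv le_rfl
  refine integral_eq_zero_of_hasDerivAt_of_integrable (f := fun s => β s ^ 2 / 2) (fun s => ?_)
    ((hβ.continuous.mul hβ').integrable_of_hasCompactSupport hsupp.mul_right)
    (Continuous.integrable_of_hasCompactSupport (by fun_prop)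
      (hsupp.comp_left (g := fun t => t ^ 2 / 2) (by simp)))
  refine ((((hβ.differentiable one_ne_zero) s).hasDerivAt.pow 2).div_const 2).congr_deriv ?_
  simp only [Nat.cast_ofNat, Nat.add_one_sub_one, pow_one]
  ring

lemma integrable_sq_of_hasCompactSupport (hβ : Continuous β) (hsupp : HasCompactSupport β) :
    Integrable fun s => β s ^ 2 := by
  simp only [sq]
  exact (hβ.mul hβ).integrable_of_hasCompactSupport hsupp.mul_right

lemma integral_exp_mul_deriv_hardyProfile_sq (hβ : ContDiff ℝ 1 β) (hsupp : HasCompactSupport β)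
    (hL : 0 < L) :
    ∫ s, Real.exp s * deriv (hardyProfile β L) s ^ 2 =
      L⁻¹ * (∫ s, deriv β s ^ 2) + L / 4 * ∫ s, β s ^ 2 := by
  have hβ' := hβ.continuous_deriv le_rfl
  have hinteg := integrable_sq_of_hasCompactSupport hβ.continuous hsupp
  have hinteg' := integrable_sq_of_hasCompactSupport hβ' hsupp.deriv
  have hcross : Integrable fun s => β s * deriv β s :=
    (hβ.continuous.mul hβ').integrable_of_hasCompactSupport hsupp.mul_right
  have hdiff : Integrable fun t => (L ^ 2)⁻¹ * deriv β t ^ 2 - L⁻¹ * (β t * deriv β t) :=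
    (hinteg'.const_mul _).sub (hcross.const_mul _)
  have hsq (t : ℝ) : (deriv β t / L - β t / 2) ^ 2 =
      (L ^ 2)⁻¹ * deriv β t ^ 2 - L⁻¹ * (β t * deriv β t) + 4⁻¹ * β t ^ 2 := by
    ring
  simp only [deriv_hardyProfile (hβ.differentiable one_ne_zero), exp_mul_exp_neg_half_mul_sq]
  rw [Measure.integral_comp_div (fun t => (deriv β t / L - β t / 2) ^ 2)]
  simp only [hsq]
  rw [integral_add hdiff (hinteg.const_mul _),
    integral_sub (hinteg'.const_mul _) (hcross.const_mul _), integral_const_mul, integral_const_mul,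
    integral_const_mul, integral_mul_deriv_self_eq_zero hβ hsupp, abs_of_pos hL, smul_eq_mul]
  field_simp
  ring

lemma exists_contDiff_hasCompactSupport_zero_notMem_tsupport :
    ∃ β : ℝ → ℝ, ContDiff ℝ (⊤ : ℕ∞) β ∧ HasCompactSupport β ∧ 0 ∉ tsupport β ∧ β 2 ≠ 0 := by
  let β : ContDiffBump (2 : ℝ) := ⟨1 / 2, 1, by norm_num, by norm_num⟩
  refine ⟨β, β.contDiff, β.hasCompactSupport, ?_, (β.pos_of_mem_ball (by simp [β])).ne'⟩
  rw [β.tsupport_eq]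
  norm_num [β, Real.closedBall_eq_Icc]

/-- With `r = e^s` this says that the constant `1/4` in Hardy's inequality
`∫ η'(r)² r² dr ≥ 1/4 ∫ η(r)² dr` is optimal. -/
theorem exists_integral_exp_mul_deriv_sq_lt {c : ℝ} (hc : 1 / 4 < c) :
    ∃ φ : ℝ → ℝ, ContDiff ℝ (⊤ : ℕ∞) φ ∧ HasCompactSupport φ ∧ 0 ∉ tsupport φ ∧
      ∫ s, Real.exp s * deriv φ s ^ 2 < c * ∫ s, Real.exp s * φ s ^ 2 := by
  obtain ⟨β, hβ, hsupp, hzero, hne⟩ := exists_contDiff_hasCompactSupport_zero_notMem_tsupport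
  have hβ1 : ContDiff ℝ 1 β := hβ.of_le (mod_cast le_top)
  set P := ∫ s, deriv β s ^ 2
  set Q := ∫ s, β s ^ 2
  have hP : 0 ≤ P := integral_nonneg fun s => sq_nonneg _
  have hQ : 0 < Q := integral_pos_of_integrable_nonneg_nonzero (hβ.continuous.pow 2)
    (integrable_sq_of_hasCompactSupport hβ.continuous hsupp) (fun s => sq_nonneg _)
    (pow_ne_zero 2 hne)
  have hgap : 0 < (c - 1 / 4) * Q := mul_pos (sub_pos.2 hc) hQ
  set L := 1 + P / ((c - 1 / 4) * Q) with hLdef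
  have hL : 1 ≤ L := by
    rw [hLdef, le_add_iff_nonneg_right]
    positivity
  have hPL : P < (c - 1 / 4) * Q * L := by
    rw [hLdef, mul_add, mul_div_cancel₀ _ hgap.ne']
    linarith
  have hL0 : 0 < L := one_pos.trans_le hL
  refine ⟨hardyProfile β L, contDiff_hardyProfile hβ L,
    hasCompactSupport_hardyProfile hsupp hL0.ne', zero_notMem_tsupport_hardyProfile hzero L, ?_⟩
  rw [integral_exp_mul_deriv_hardyProfile_sq hβ1 hsupp hL0, integral_exp_mul_hardyProfile_sq β hL0]
  have hPinv : L⁻¹ * P < (c - 1 / 4) * Q * L := by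
    rw [inv_mul_lt_iff₀ hL0]
    nlinarith
  linarith

end Hardy

section TargetSpace

/-- The inner product `vdot` as a continuous bilinear form. -/
def vdotForm : V5 →L[ℝ] V5 →L[ℝ] ℝ :=
  (LinearMap.mk₂ ℝ vdot
    (fun p q r => by simp only [vdot, Prod.fst_add, Prod.snd_add, add_mul, Complex.add_re]; ring)
    (fun c p q => by
      simp only [vdot, Prod.smul_fst, Prod.smul_snd, smul_mul_assoc, Complex.smul_re, smul_eq_mul]
      ring)
    (fun p q r => by
      simp only [vdot, Prod.fst_add, Prod.snd_add, map_add, mul_add, Complex.add_re]; ring)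
    (fun c p q => by
      simp only [vdot, Prod.smul_fst, Prod.smul_snd, Complex.real_smul, map_mul,
        Complex.conj_ofReal, mul_left_comm _ (c : ℂ), Complex.re_ofReal_mul, smul_eq_mul]
      ring)).toContinuousBilinearMap

lemma vdotForm_apply (p q : V5) : vdotForm p q = vdot p q := rfl

lemma vdot_comm (p q : V5) : vdot p q = vdot q p := by
  simp only [vdot, Complex.mul_re, Complex.conj_re, Complex.conj_im]
  ring

lemma nsq_eq_vdot_self (p : V5) : nsq p = vdot p p := by
  simp only [nsq, vdot, Complex.mul_conj, Complex.ofReal_re, sq]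

lemma vdot_smul_right (c : ℝ) (p q : V5) : vdot p (c • q) = c * vdot p q :=
  (vdotForm p).map_smul c q

lemma vdot_smul_left (c : ℝ) (p q : V5) : vdot (c • p) q = c * vdot p q := by
  rw [vdot_comm, vdot_smul_right, vdot_comm]

lemma nsq_smul (c : ℝ) (p : V5) : nsq (c • p) = c ^ 2 * nsq p := by
  rw [nsq_eq_vdot_self, vdot_smul_left, vdot_smul_right, ← nsq_eq_vdot_self, ← mul_assoc, sq]

lemma nsq_sub (p q : V5) : nsq (p - q) = nsq p - 2 * vdot p q + nsq q := by
  have hcomm := vdot_comm q p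
  simp only [nsq_eq_vdot_self, ← vdotForm_apply, map_sub, _root_.sub_apply] at hcomm ⊢
  linear_combination -hcomm

lemma nsq_sub_vdot_smul {w : V5} (hw : nsq w = 1) (e : V5) :
    nsq (e - vdot w e • w) = nsq e - vdot w e ^ 2 := by
  rw [nsq_sub, nsq_smul, vdot_smul_right, vdot_comm e w, hw]
  ring

lemma nsq_smul_tangent_sub_smul {w d : V5} (hw : nsq w = 1) (hwd : vdot w d = 0) (e : V5)
    (a b : ℝ) :
    nsq (a • (e - vdot w e • w) - b • (vdot d e • w + vdot w e • d)) =
      a ^ 2 * (nsq e - vdot w e ^ 2) - 2 * (a * b * (vdot w e * vdot d e)) +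
        b ^ 2 * (vdot d e ^ 2 + vdot w e ^ 2 * nsq d) := by
  have hcomm := vdot_comm
  simp only [nsq_eq_vdot_self, ← vdotForm_apply, map_add, map_sub, map_smul, _root_.add_apply,
    _root_.sub_apply, _root_.smul_apply, smul_eq_mul] at hw hwd hcomm ⊢
  rw [hcomm e w, hcomm e d, hcomm d w, hw, hwd]
  ring

end TargetSpace

section SecondVariation

open Filter Topology

lemma hasFDerivAt_vdot_const {E : Type*} [NormedAddCommGroup E] [NormedSpace ℝ E] {w : E → V5}
    {w' : E →L[ℝ] V5} {x : E} (hw : HasFDerivAt w w' x) (e : V5) :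
    HasFDerivAt (fun y => vdot (w y) e) (vdotForm.flip e ∘L w') x :=
  (vdotForm.flip e).hasFDerivAt.comp x hw

lemma vdot_fderiv_eq_zero_of_nsq_eq_one {E : Type*} [NormedAddCommGroup E] [NormedSpace ℝ E]
    {w : E → V5} {x : E} (hw : DifferentiableAt ℝ w x) (hunit : ∀ᶠ y in 𝓝 x, nsq (w y) = 1)
    (v : E) : vdot (w x) (fderiv ℝ w x v) = 0 := by
  have hsq := vdotForm.hasFDerivAt_of_bilinear hw.hasFDerivAt hw.hasFDerivAt
  have hconst : (fun y => vdotForm (w y) (w y)) =ᶠ[𝓝 x] fun _ => 1 := by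
    filter_upwards [hunit] with y hy
    rw [vdotForm_apply, ← nsq_eq_vdot_self, hy]
  have hzero := DFunLike.congr_fun
    (hsq.unique ((hasFDerivAt_const (1 : ℝ) x).congr_of_eventuallyEq hconst)) v
  have hcomm := vdot_comm (fderiv ℝ w x v) (w x)
  simp only [ContinuousLinearMap.precompR_apply, ContinuousLinearMap.precompL_apply,
    ContinuousLinearMap.compL_apply, ContinuousLinearMap.comp_apply, _root_.add_apply,
    _root_.zero_apply, vdotForm_apply] at hzero
  linarith

/-- The pointwise inner product `∇f · ∇g`. -/
def gradDot (f g : E3 → ℝ) (x : E3) : ℝ :=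
  ∑ i : Fin 3, fderiv ℝ f x (EuclideanSpace.single i 1) * fderiv ℝ g x (EuclideanSpace.single i 1)

variable {w : E3 → V5} {η : E3 → ℝ} {x : E3}

lemma tangPart_smul_const (w : E3 → V5) (η : E3 → ℝ) (e : V5) (x : E3) :
    tangPart w (fun y => η y • e) x = η x • (e - vdot (w x) e • w x) := by
  rw [tangPart, vdot_smul_right, smul_sub, smul_smul]

lemma fderiv_tangPart_smul_const (hw : DifferentiableAt ℝ w x) (hη : DifferentiableAt ℝ η x)
    (e : V5) (v : E3) :
    fderiv ℝ (tangPart w fun y => η y • e) x v =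
      fderiv ℝ η x v • (e - vdot (w x) e • w x) -
        η x • (vdot (fderiv ℝ w x v) e • w x + vdot (w x) e • fderiv ℝ w x v) := by
  have hproj := (hasFDerivAt_vdot_const hw.hasFDerivAt e).fun_smul hw.hasFDerivAt
  have htang := hη.hasFDerivAt.fun_smul (hproj.const_sub e)
  rw [funext (tangPart_smul_const w η e), htang.fderiv]
  simp only [neg_add_rev, _root_.add_apply, _root_.neg_apply, _root_.smul_apply,
    ContinuousLinearMap.smulRight_apply, ContinuousLinearMap.comp_apply,
    ContinuousLinearMap.flip_apply, vdotForm_apply]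
  module

lemma gradSq_tangPart_smul_const (hw : DifferentiableAt ℝ w x)
    (hunit : ∀ᶠ y in 𝓝 x, nsq (w y) = 1) (hη : DifferentiableAt ℝ η x) (e : V5) :
    gradSq (tangPart w fun y => η y • e) x =
      gradSqR η x * (nsq e - vdot (w x) e ^ 2) -
        2 * η x * vdot (w x) e * gradDot η (fun y => vdot (w y) e) x +
        η x ^ 2 * (gradSqR (fun y => vdot (w y) e) x + vdot (w x) e ^ 2 * gradSq w x) := by
  have hfderiv (v : E3) : fderiv ℝ (fun y => vdot (w y) e) x v = vdot (fderiv ℝ w x v) e := by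
    rw [(hasFDerivAt_vdot_const hw.hasFDerivAt e).fderiv]
    rfl
  simp only [gradSq, gradSqR, gradDot, fderiv_tangPart_smul_const hw hη, hfderiv,
    nsq_smul_tangent_sub_smul hunit.self_of_nhds (vdot_fderiv_eq_zero_of_nsq_eq_one hw hunit _),
    Finset.sum_add_distrib, Finset.sum_sub_distrib, Finset.sum_mul, Finset.mul_sum, mul_add]
  congr! 3
  ring

lemma secondVar_density_smul_const (hw : DifferentiableAt ℝ w x)
    (hunit : ∀ᶠ y in 𝓝 x, nsq (w y) = 1) (hη : DifferentiableAt ℝ η x) (e : V5)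
    (horth : gradDot η (fun y => vdot (w y) e) x = 0) :
    gradSq (tangPart w fun y => η y • e) x -
        gradSq w x * nsq (tangPart w (fun y => η y • e) x) =
      gradSqR η x * (nsq e - vdot (w x) e ^ 2) +
        η x ^ 2 * (gradSqR (fun y => vdot (w y) e) x -
          gradSq w x * (nsq e - 2 * vdot (w x) e ^ 2)) := by
  rw [gradSq_tangPart_smul_const hw hunit hη, horth, tangPart_smul_const, nsq_smul,
    nsq_sub_vdot_smul hunit.self_of_nhds]
  ring

end SecondVariation

section RadialGradient

open scoped RealInnerProductSpace

variable {φ : ℝ → ℝ} {x : E3}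

lemma fderiv_comp_log_norm (hφ : Differentiable ℝ φ) (hx : x ≠ 0) (v : E3) :
    fderiv ℝ (fun y => φ (Real.log ‖y‖)) x v = deriv φ (Real.log ‖x‖) * ⟪x, v⟫ / ‖x‖ ^ 2 := by
  have h := (hφ (Real.log ‖x‖)).hasDerivAt.comp_hasFDerivAt x (hasFDerivAt_log_norm hx)
  have h' : HasFDerivAt (fun y => φ (Real.log ‖y‖)) _ x := h
  rw [h'.fderiv]
  simp only [_root_.smul_apply, coe_innerSL_apply, smul_eq_mul]
  ring

lemma gradDot_comp_log_norm (hφ : Differentiable ℝ φ) (hx : x ≠ 0) (g : E3 → ℝ) :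
    gradDot (fun y => φ (Real.log ‖y‖)) g x =
      deriv φ (Real.log ‖x‖) / ‖x‖ ^ 2 * fderiv ℝ g x x := by
  have hexpand : fderiv ℝ g x x = ∑ i, x i * fderiv ℝ g x (EuclideanSpace.single i 1) := by
    simpa using congrArg (fderiv ℝ g x) ((EuclideanSpace.basisFun (Fin 3) ℝ).sum_repr x).symm
  simp only [gradDot, fderiv_comp_log_norm hφ hx, hexpand, Finset.mul_sum]
  congr! 1 with i
  rw [EuclideanSpace.inner_single_right, conj_trivial]
  ring

lemma gradSqR_comp_log_norm (hφ : Differentiable ℝ φ) (hx : x ≠ 0) :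
    gradSqR (fun y => φ (Real.log ‖y‖)) x = deriv φ (Real.log ‖x‖) ^ 2 / ‖x‖ ^ 2 := by
  have hself : gradSqR (fun y : E3 => φ (Real.log ‖y‖)) x =
      gradDot (fun y => φ (Real.log ‖y‖)) (fun y => φ (Real.log ‖y‖)) x := by
    simp only [gradSqR, gradDot, sq]
  have hr : ‖x‖ ^ 2 ≠ 0 := by simpa using hx
  rw [hself, gradDot_comp_log_norm hφ hx, fderiv_comp_log_norm hφ hx, real_inner_self_eq_norm_sq,
    mul_div_cancel_right₀ _ hr]
  ring

end RadialGradient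

section Veronese

open scoped RealInnerProductSpace

/-- The projection to the plane orthogonal to the axis of the circle action, identified with `ℂ`. -/
def planar : E3 →ₗ[ℝ] ℂ where
  toFun x := ⟨x 0, x 1⟩
  map_add' _ _ := rfl
  map_smul' c x := by apply Complex.ext <;> simp

lemma planar_re (x : E3) : (planar x).re = x 0 := rfl

lemma planar_im (x : E3) : (planar x).im = x 1 := rfl

/-- The polarization of the quadratic form that restricts to the Veronese map on the sphere. -/
def veroneseForm : E3 →L[ℝ] E3 →L[ℝ] V5 :=
  (LinearMap.mk₂ ℝ
    (fun x y => (x 2 * y 2 - (x 0 * y 0 + x 1 * y 1) / 2,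
      (√3 / 2) • (x 2 • planar y + y 2 • planar x), (√3 / 2) • (planar x * planar y)))
    (fun _ _ _ => by ext1 <;> [simp; ext1 <;> simp] <;> ring)
    (fun _ _ _ => by ext1 <;> [simp; ext1 <;> simp] <;> ring)
    (fun _ _ _ => by ext1 <;> [simp; ext1 <;> simp] <;> ring)
    (fun _ _ _ => by ext1 <;> [simp; ext1 <;> simp] <;> ring)).toContinuousBilinearMap

lemma veroneseForm_apply (x y : E3) : veroneseForm x y =
    (x 2 * y 2 - (x 0 * y 0 + x 1 * y 1) / 2,
      (√3 / 2) • (x 2 • planar y + y 2 • planar x), (√3 / 2) • (planar x * planar y)) := rfl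

lemma veroneseForm_comm (x y : E3) : veroneseForm x y = veroneseForm y x := by
  simp only [veroneseForm_apply, mul_comm (x _), mul_comm (planar x), add_comm (x 2 • _)]

lemma inner_eq_sum_three (x y : E3) : ⟪x, y⟫ = x 0 * y 0 + x 1 * y 1 + x 2 * y 2 := by
  simp [PiLp.inner_apply, Fin.sum_univ_three, mul_comm]

lemma vdot_veroneseForm (x y z w : E3) :
    vdot (veroneseForm x y) (veroneseForm z w) =
      3 / 4 * (⟪x, z⟫ * ⟪y, w⟫ + ⟪x, w⟫ * ⟪y, z⟫) - 1 / 2 * (⟪x, y⟫ * ⟪z, w⟫) := by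
  have hscale (a b : ℝ) : √3 / 2 * a * (√3 / 2 * b) = 3 / 4 * (a * b) := by
    linear_combination a * b / 4 * Real.mul_self_sqrt zero_le_three
  simp only [veroneseForm_apply, vdot, inner_eq_sum_three, planar_re, planar_im, Complex.mul_re,
    Complex.conj_re, Complex.mul_im, Complex.conj_im, Complex.add_re,
    Complex.add_im, Complex.smul_re, Complex.smul_im, smul_eq_mul, mul_neg, hscale]
  ring

lemma veroneseForm_fst (x y : E3) : (veroneseForm x y).1 = (3 * (x 2 * y 2) - ⟪x, y⟫) / 2 := by
  rw [veroneseForm_apply, inner_eq_sum_three]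
  ring

/-- The Veronese map, extended to `ℝ³ ∖ {0}` homogeneously of degree zero. -/
def veronese : E3 → V5 := homExt fun x => veroneseForm x x

lemma veronese_eq_smul (x : E3) : veronese x = (‖x‖ ^ 2)⁻¹ • veroneseForm x x := by
  simp only [veronese, homExt, map_smul, _root_.smul_apply, smul_smul, ← sq, inv_pow]

variable {x : E3}

lemma nsq_veronese (hx : x ≠ 0) : nsq (veronese x) = 1 := by
  have hr : ‖x‖ ≠ 0 := norm_ne_zero_iff.2 hx
  rw [veronese_eq_smul, nsq_smul, nsq_eq_vdot_self, vdot_veroneseForm, real_inner_self_eq_norm_sq]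
  field_simp
  norm_num

lemma hasFDerivAt_veronese (hx : x ≠ 0) :
    HasFDerivAt veronese
      ((2 / ‖x‖ ^ 2) • veroneseForm x -
        (2 / ‖x‖ ^ 4) • (innerSL ℝ x).smulRight (veroneseForm x x)) x := by
  have hr : ‖x‖ ≠ 0 := norm_ne_zero_iff.2 hx
  have hinv := (hasDerivAt_inv (pow_ne_zero 2 hr)).comp_hasFDerivAt x (hasFDerivAt_id x).norm_sq
  have hform := veroneseForm.hasFDerivAt_of_bilinear (hasFDerivAt_id x) (hasFDerivAt_id x)
  have hprod := (hinv.fun_smul hform).congr_of_eventuallyEq (.of_forall veronese_eq_smul)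
  refine hprod.congr_fderiv ?_
  ext1 v
  simp only [id_eq, Function.comp_apply, ContinuousLinearMap.precompR_apply,
    ContinuousLinearMap.precompL_apply, ContinuousLinearMap.compL_apply,
    ContinuousLinearMap.comp_id, ContinuousLinearMap.id_apply, _root_.add_apply, _root_.sub_apply,
    _root_.smul_apply, ContinuousLinearMap.smulRight_apply, coe_innerSL_apply, nsmul_eq_mul,
    Nat.cast_ofNat, smul_eq_mul, veroneseForm_comm v x]
  module

lemma nsq_fderiv_veronese (hx : x ≠ 0) (v : E3) :
    nsq (fderiv ℝ veronese x v) = 3 * (‖x‖ ^ 2 * ‖v‖ ^ 2 - ⟪x, v⟫ ^ 2) / ‖x‖ ^ 4 := by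
  have hr : ‖x‖ ≠ 0 := norm_ne_zero_iff.2 hx
  rw [(hasFDerivAt_veronese hx).fderiv]
  simp only [_root_.sub_apply, _root_.smul_apply, ContinuousLinearMap.smulRight_apply,
    innerSL_apply_apply, smul_smul, nsq_sub, nsq_smul, vdot_smul_left,
    vdot_smul_right]
  simp only [nsq_eq_vdot_self, vdot_veroneseForm, real_inner_self_eq_norm_sq,
    real_inner_comm v x]
  field_simp
  ring

lemma sum_inner_single_sq (x : E3) :
    ∑ i, ⟪x, EuclideanSpace.single i 1⟫ ^ 2 = ‖x‖ ^ 2 := by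
  simpa using (EuclideanSpace.basisFun (Fin 3) ℝ).sum_sq_inner_left x

lemma gradSq_veronese (hx : x ≠ 0) : gradSq veronese x = 6 / ‖x‖ ^ 2 := by
  have hr : ‖x‖ ≠ 0 := norm_ne_zero_iff.2 hx
  simp only [gradSq, nsq_fderiv_veronese hx]
  rw [← Finset.sum_div, ← Finset.mul_sum, Finset.sum_sub_distrib, sum_inner_single_sq]
  simp only [PiLp.norm_single, norm_one, Finset.sum_const, Finset.card_univ, Fintype.card_fin,
    nsmul_eq_mul]
  field_simp
  norm_num

lemma fderiv_veronese_fst (hx : x ≠ 0) (v : E3) :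
    (fderiv ℝ veronese x v).1 = 3 * x 2 * (‖x‖ ^ 2 * v 2 - x 2 * ⟪x, v⟫) / ‖x‖ ^ 4 := by
  have hr : ‖x‖ ≠ 0 := norm_ne_zero_iff.2 hx
  rw [(hasFDerivAt_veronese hx).fderiv]
  simp only [_root_.sub_apply, _root_.smul_apply, ContinuousLinearMap.smulRight_apply,
    innerSL_apply_apply, Prod.fst_sub, Prod.smul_fst, veroneseForm_fst, real_inner_self_eq_norm_sq,
    smul_eq_mul]
  field_simp
  ring

lemma dirCos_northPole (x : E3) : dirCos northPole x = x 2 / ‖x‖ := by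
  simp [dirCos, northPole, EuclideanSpace.inner_single_left]

lemma veronese_fst (hx : x ≠ 0) : (veronese x).1 = (3 * dirCos northPole x ^ 2 - 1) / 2 := by
  have hr : ‖x‖ ≠ 0 := norm_ne_zero_iff.2 hx
  rw [veronese_eq_smul, Prod.smul_fst, veroneseForm_fst, dirCos_northPole,
    real_inner_self_eq_norm_sq, smul_eq_mul]
  field_simp

/-- The unit vector spanning the fixed line of the circle action `circAct`. -/
def axisVec : V5 := (1, 0, 0)

lemma vdot_axisVec (p : V5) : vdot p axisVec = p.1 := by
  simp [vdot, axisVec]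

lemma nsq_axisVec : nsq axisVec = 1 := by
  simp [nsq, axisVec]

lemma circAct_smul_axisVec (α c : ℝ) : circAct α (c • axisVec) = c • axisVec := by
  simp [circAct, axisVec]

lemma fderiv_vdot_veronese_axisVec (hx : x ≠ 0) (v : E3) :
    fderiv ℝ (fun y => vdot (veronese y) axisVec) x v =
      3 * x 2 * (‖x‖ ^ 2 * v 2 - x 2 * ⟪x, v⟫) / ‖x‖ ^ 4 := by
  have h := hasFDerivAt_vdot_const (hasFDerivAt_veronese hx).differentiableAt.hasFDerivAt axisVec
  rw [h.fderiv, ← fderiv_veronese_fst hx, ← vdot_axisVec]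
  rfl

lemma gradSqR_vdot_veronese_axisVec (hx : x ≠ 0) :
    gradSqR (fun y => vdot (veronese y) axisVec) x =
      9 * dirCos northPole x ^ 2 * (1 - dirCos northPole x ^ 2) / ‖x‖ ^ 2 := by
  have hr : ‖x‖ ≠ 0 := norm_ne_zero_iff.2 hx
  have hsum : x 0 ^ 2 + x 1 ^ 2 = ‖x‖ ^ 2 - x 2 ^ 2 := by
    rw [EuclideanSpace.norm_sq_eq]
    simp [Fin.sum_univ_three]
  simp only [gradSqR, fderiv_vdot_veronese_axisVec hx, dirCos_northPole, Fin.sum_univ_three,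
    EuclideanSpace.inner_single_right, PiLp.single_apply, Fin.reduceEq, ↓reduceIte, conj_trivial]
  field_simp
  linear_combination 9 * x 2 ^ 4 * hsum

lemma eventually_nsq_veronese (hx : x ≠ 0) : ∀ᶠ y in nhds x, nsq (veronese y) = 1 :=
  (eventually_ne_nhds hx).mono fun _ => nsq_veronese

/-- The field `φ(log |x|) e₀`, whose amplitude `φ` is a function of logarithmic radius. -/
def axialField (φ : ℝ → ℝ) (x : E3) : V5 := φ (Real.log ‖x‖) • axisVec

lemma secondVar_density_veronese_axialField {φ : ℝ → ℝ} (hφ : Differentiable ℝ φ) (hx : x ≠ 0) :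
    gradSq (tangPart veronese (axialField φ)) x -
        gradSq veronese x * nsq (tangPart veronese (axialField φ) x) =
      deriv φ (Real.log ‖x‖) ^ 2 / ‖x‖ ^ 2 *
          (3 / 4 + 3 / 2 * dirCos northPole x ^ 2 + -9 / 4 * dirCos northPole x ^ 4) +
        φ (Real.log ‖x‖) ^ 2 / ‖x‖ ^ 2 *
          (-3 + -9 * dirCos northPole x ^ 2 + 18 * dirCos northPole x ^ 4) := by
  have horth : gradDot (fun y => φ (Real.log ‖y‖)) (fun y => vdot (veronese y) axisVec) x = 0 := by
    rw [gradDot_comp_log_norm hφ hx, fderiv_vdot_veronese_axisVec hx, real_inner_self_eq_norm_sq]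
    ring
  have hη : DifferentiableAt ℝ (fun y : E3 => φ (Real.log ‖y‖)) x :=
    (hφ _).comp x (hasFDerivAt_log_norm hx).differentiableAt
  have hdensity := secondVar_density_smul_const (hasFDerivAt_veronese hx).differentiableAt
    (eventually_nsq_veronese hx) hη axisVec horth
  rw [gradSqR_comp_log_norm hφ hx, gradSqR_vdot_veronese_axisVec hx, gradSq_veronese hx,
    nsq_axisVec, vdot_axisVec, veronese_fst hx] at hdensity
  rw [gradSq_veronese hx]
  refine hdensity.trans ?_
  ring

lemma basisFun_two : EuclideanSpace.basisFun (Fin 3) ℝ 2 = northPole := by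
  rw [EuclideanSpace.basisFun_apply, northPole]

section LogRadialAverages

variable {ψ : ℝ → ℝ} (hψ : Continuous ψ) (hsupp : HasCompactSupport ψ) (hψ0 : ψ 0 = 0)
include hψ hsupp hψ0

lemma integrable_comp_log_norm_sq_div_norm_sq :
    Integrable fun x : E3 => ψ (Real.log ‖x‖) ^ 2 / ‖x‖ ^ 2 := by
  simp only [sq (ψ _)]
  exact integrable_comp_log_norm_div_norm_pow (φ := fun s => ψ s * ψ s) (by fun_prop)
    hsupp.mul_right (by simp [hψ0]) 2

lemma integral_comp_log_norm_sq_mul_dirCos_quartic (a₀ a₂ a₄ : ℝ) :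
    ∫ x : E3, ψ (Real.log ‖x‖) ^ 2 / ‖x‖ ^ 2 *
        (a₀ + a₂ * dirCos northPole x ^ 2 + a₄ * dirCos northPole x ^ 4) =
      (3 * a₀ + a₂ + 3 / 5 * a₄) * volume.real (Metric.ball (0 : E3) 1) *
        ∫ s, Real.exp s * ψ s ^ 2 := by
  have haverage := integral_radial_mul_dirCos_quartic (f := fun r => ψ (Real.log r) ^ 2 / r ^ 2)
    (integrable_comp_log_norm_sq_div_norm_sq hψ hsupp hψ0)
    (EuclideanSpace.basisFun (Fin 3) ℝ) 2 a₀ a₂ a₄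
  have hradial := integral_comp_log_norm_div_norm_pow (φ := fun s => ψ s ^ 2)
    (volume : Measure E3) (by simp [hψ0]) 2
  have hexp : (fun s => Real.exp (((3 : ℕ) - (2 : ℕ) : ℝ) * s) * ψ s ^ 2) =
      fun s => Real.exp s * ψ s ^ 2 := by
    norm_num
  rw [finrank_euclideanSpace_fin, hexp] at hradial
  rw [basisFun_two, hradial, Fintype.card_fin] at haverage
  rw [haverage]
  push_cast
  ring

end LogRadialAverages

/-- The component `veronese · e₀ = P₂` has spherical mean square `1/5`, and `|x|² |∇P₂|²` has mean
`6/5`: the coefficient of `φ'²` averages to `1 - 1/5` and that of `φ²` to `6/5 - 6 (1 - 2/5)`. -/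
theorem secondVar_veronese_axialField {φ : ℝ → ℝ} (hφ : ContDiff ℝ 1 φ)
    (hsupp : HasCompactSupport φ) (hzero : 0 ∉ tsupport φ) :
    secondVar veronese (axialField φ) = 12 / 5 * volume.real (Metric.ball (0 : E3) 1) *
      ((∫ s, Real.exp s * deriv φ s ^ 2) - 3 * ∫ s, Real.exp s * φ s ^ 2) := by
  have hφ0 : φ 0 = 0 := image_eq_zero_of_notMem_tsupport hzero
  have hφ'0 : deriv φ 0 = 0 := Function.notMem_support.1 fun h => hzero (support_deriv_subset h)
  have hφ' := hφ.continuous_deriv le_rfl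
  calc secondVar veronese (axialField φ)
      = ∫ x : E3,
          (deriv φ (Real.log ‖x‖) ^ 2 / ‖x‖ ^ 2 *
              (3 / 4 + 3 / 2 * dirCos northPole x ^ 2 + -9 / 4 * dirCos northPole x ^ 4) +
            φ (Real.log ‖x‖) ^ 2 / ‖x‖ ^ 2 *
              (-3 + -9 * dirCos northPole x ^ 2 + 18 * dirCos northPole x ^ 4)) :=
        integral_congr_ae <| (Measure.ae_ne volume (0 : E3)).mono fun _ =>
          secondVar_density_veronese_axialField (hφ.differentiable one_ne_zero)
    _ = _ := by
      rw [integral_add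
          (integrable_mul_dirCos_quartic
            (integrable_comp_log_norm_sq_div_norm_sq hφ' hsupp.deriv hφ'0) northPole _ _ _)
          (integrable_mul_dirCos_quartic
            (integrable_comp_log_norm_sq_div_norm_sq hφ.continuous hsupp hφ0) northPole _ _ _),
        integral_comp_log_norm_sq_mul_dirCos_quartic hφ' hsupp.deriv hφ'0,
        integral_comp_log_norm_sq_mul_dirCos_quartic hφ.continuous hsupp hφ0]
      ring

lemma norm_rot3 (α : ℝ) (x : E3) : ‖rot3 α x‖ = ‖x‖ := by
  have h0 : rot3 α x 0 = Real.cos α * x 0 - Real.sin α * x 1 := by simp [rot3]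
  have h1 : rot3 α x 1 = Real.sin α * x 0 + Real.cos α * x 1 := by simp [rot3]
  have h2 : rot3 α x 2 = x 2 := by simp [rot3]
  rw [← sq_eq_sq₀ (norm_nonneg _) (norm_nonneg _)]
  simp only [← real_inner_self_eq_norm_sq, inner_eq_sum_three, h0, h1, h2]
  linear_combination (x 0 ^ 2 + x 1 ^ 2) * Real.sin_sq_add_cos_sq α

lemma equivariantV_axialField (φ : ℝ → ℝ) : EquivariantV (axialField φ) := fun α x => by
  simp only [axialField, norm_rot3, circAct_smul_axisVec]

section AxialField

variable {φ : ℝ → ℝ}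

lemma contDiff_axialField {n : WithTop ℕ∞} (hφ : ContDiff ℝ n φ) (hsupp : HasCompactSupport φ)
    (hφ0 : φ 0 = 0) : ContDiff ℝ n (axialField φ) :=
  (contDiff_comp_log_norm hφ hsupp hφ0).smul contDiff_const

lemma hasCompactSupport_axialField (hsupp : HasCompactSupport φ) :
    HasCompactSupport (axialField φ) :=
  (hasCompactSupport_comp_log_norm hsupp).smul_right

lemma zero_notMem_tsupport_axialField (hsupp : HasCompactSupport φ) (hφ0 : φ 0 = 0) :
    0 ∉ tsupport (axialField φ) := by
  rw [notMem_tsupport_iff_eventuallyEq]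
  filter_upwards [comp_log_norm_eventuallyEq_zero (E := E3) hsupp hφ0] with x hx
  rw [axialField, hx, Pi.zero_apply, Pi.zero_apply, zero_smul]

end AxialField

end Veronese

section Hopf

lemma veroneseForm_self (x : E3) : veroneseForm x x =
    (x 2 ^ 2 - Complex.normSq (planar x) / 2, √3 * x 2 * planar x, √3 / 2 * planar x ^ 2) := by
  rw [veroneseForm_apply, Complex.normSq_apply]
  ext1
  · simp only [planar_re, planar_im]
    ring
  · ext1 <;> simp only [Complex.real_smul] <;> push_cast <;> ring

/-- The Hopf map `ℂ² ∖ {0} → S²`, the inverse of the identification of `S²` with `ℂP¹`. -/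
def hopf (z₀ z₁ : ℂ) : E3 :=
  let p := 2 * (starRingEnd ℂ z₀ * z₁) / (Complex.normSq z₀ + Complex.normSq z₁)
  !₂[p.re, p.im,
    (Complex.normSq z₀ - Complex.normSq z₁) / (Complex.normSq z₀ + Complex.normSq z₁)]

variable {z₀ z₁ : ℂ}

lemma planar_hopf (z₀ z₁ : ℂ) : planar (hopf z₀ z₁) =
    2 * (starRingEnd ℂ z₀ * z₁) / (Complex.normSq z₀ + Complex.normSq z₁) := rfl

lemma hopf_two (z₀ z₁ : ℂ) : hopf z₀ z₁ 2 =
    (Complex.normSq z₀ - Complex.normSq z₁) / (Complex.normSq z₀ + Complex.normSq z₁) := rfl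

lemma normSq_add_normSq_ne_zero (hz : z₀ ≠ 0 ∨ z₁ ≠ 0) :
    Complex.normSq z₀ + Complex.normSq z₁ ≠ 0 := by
  rcases hz with h | h
  · exact (add_pos_of_pos_of_nonneg (Complex.normSq_pos.2 h) (Complex.normSq_nonneg _)).ne'
  · exact (add_pos_of_nonneg_of_pos (Complex.normSq_nonneg _) (Complex.normSq_pos.2 h)).ne'

lemma ofReal_sqrt_three_mul_self : (√3 : ℂ) * √3 = 3 := by
  rw [← Complex.ofReal_mul, Real.mul_self_sqrt zero_le_three, Complex.ofReal_ofNat]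

/-- For `μ₁ = μ₂ = √3` the coordinates of the curve are weighted so that their squared norms sum to
`(|z₀|² + |z₁|²)³`, and one factor `|z₀|² + |z₁|²` cancels from each component. -/
lemma liftCurve_sqrt_three (hz : z₀ ≠ 0 ∨ z₁ ≠ 0) :
    liftCurve √3 √3 z₀ z₁ = veroneseForm (hopf z₀ z₁) (hopf z₀ z₁) := by
  have hlast : -((√3 : ℂ) * √3 / 3) * z₁ ^ 3 = -z₁ ^ 3 := by
    rw [ofReal_sqrt_three_mul_self]
    ring
  have hD := normSq_add_normSq_ne_zero hz
  have hDC : (Complex.normSq z₀ + Complex.normSq z₁ : ℂ) ≠ 0 := mod_cast hD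
  rw [liftCurve, hlast, tau4, veroneseForm_self, planar_hopf, hopf_two]
  simp only [map_mul, map_pow, map_div₀, Complex.normSq_neg, Complex.normSq_ofReal,
    Complex.normSq_ofNat, Complex.normSq_conj, conj', Complex.conj_ofReal, ← Complex.ofReal_add,
    Real.mul_self_sqrt zero_le_three]
  set a := Complex.normSq z₀ with ha
  set b := Complex.normSq z₁ with hb
  have hsum : a ^ 3 + 3 * a ^ 2 * b + 3 * a * b ^ 2 + b ^ 3 = (a + b) ^ 3 := by ring
  have hz₀ : starRingEnd ℂ z₀ * z₀ = a := by rw [ha, mul_comm, Complex.mul_conj]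
  have hz₁ : starRingEnd ℂ z₁ * z₁ = b := by rw [hb, mul_comm, Complex.mul_conj]
  rw [hsum]
  ext1
  · field_simp
    ring
  · push_cast at hDC ⊢
    ext1 <;>
    · dsimp only
      field_simp
      rw [← hz₀, ← hz₁]
      ring

lemma hopf_one_add {x : E3} (hx : ‖x‖ = 1) (hpole : 1 + x 2 ≠ 0) :
    hopf (1 + x 2 : ℝ) (planar x) = x := by
  have hnormSq : Complex.normSq (planar x) = (1 + x 2) * (1 - x 2) := by
    have hsum := inner_eq_sum_three x x
    rw [real_inner_self_eq_norm_sq, hx] at hsum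
    rw [Complex.normSq_apply, planar_re, planar_im]
    linarith
  have hsum : (1 + x 2) * (1 + x 2) + (1 + x 2) * (1 - x 2) = 2 * (1 + x 2) := by ring
  have hplanar : planar (hopf (1 + x 2 : ℝ) (planar x)) = planar x := by
    have hC : ((1 + x 2 : ℝ) : ℂ) ≠ 0 := Complex.ofReal_ne_zero.2 hpole
    rw [planar_hopf, Complex.normSq_ofReal, hnormSq, ← Complex.ofReal_add, hsum,
      Complex.conj_ofReal, Complex.ofReal_mul, Complex.ofReal_ofNat]
    field_simp
  have htwo : hopf (1 + x 2 : ℝ) (planar x) 2 = x 2 := by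
    rw [hopf_two, Complex.normSq_ofReal, hnormSq, hsum]
    field_simp
    ring
  ext i
  fin_cases i
  · exact congrArg Complex.re hplanar
  · exact congrArg Complex.im hplanar
  · exact htwo

lemma hopf_zero_one : hopf 0 1 = southPole := by
  ext i
  fin_cases i <;> simp [hopf, southPole]

lemma one_add_ne_zero_of_ne_southPole {x : E3} (hx : ‖x‖ = 1) (hpole : x ≠ southPole) :
    1 + x 2 ≠ 0 := by
  intro htwo
  have hsum := inner_eq_sum_three x x
  rw [real_inner_self_eq_norm_sq, hx] at hsum
  have hx2 : x 2 = -1 := by linarith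
  have h0 : x 0 = 0 := by nlinarith
  have h1 : x 1 = 0 := by nlinarith
  refine hpole ?_
  ext i
  fin_cases i
  · simpa [southPole] using h0
  · simpa [southPole] using h1
  · simpa [southPole] using hx2

lemma omegaFam_sqrt_three {x : E3} (hx : ‖x‖ = 1) :
    omegaFam √3 √3 x = veroneseForm x x := by
  have hsqrt : (√3 : ℂ) ≠ 0 := by simp
  unfold omegaFam
  split_ifs with hpole h1 h2
  · exact absurd h1.1 hsqrt
  · rw [liftCurve_sqrt_three (.inr one_ne_zero), hopf_zero_one, hpole]
  · exact absurd ⟨hsqrt, hsqrt⟩ h2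
  · have hx2 := one_add_ne_zero_of_ne_southPole hx hpole
    have hplanar : (x 0 : ℂ) + x 1 * Complex.I = planar x := Complex.re_add_im (planar x)
    rw [hplanar, liftCurve_sqrt_three (.inl (Complex.ofReal_ne_zero.2 hx2)), hopf_one_add hx hx2]

lemma frob_smul_vecMulVec_sub_smul (c a : ℝ) (y : Fin 3 → ℝ) (B : M3) :
    frob (c • (Matrix.vecMulVec y y - (3 : ℝ)⁻¹ • (1 : M3))) (a • B) =
      c * a * (y ⬝ᵥ B *ᵥ y - B.trace / 3) := by
  simp only [frob, Matrix.smul_mul, Matrix.mul_smul, Matrix.trace_smul, sub_mul, one_mul,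
    Matrix.trace_sub, Matrix.vecMulVec_mul, Matrix.trace_vecMulVec, smul_eq_mul]
  rw [dotProduct_comm y (y ᵥ* B), ← Matrix.dotProduct_mulVec]
  ring

lemma iotaStar_smul_vecMulVec_sub (y : E3) :
    iotaStar (√(3 / 2) • (Matrix.vecMulVec y y - (3 : ℝ)⁻¹ • (1 : M3))) = veroneseForm y y := by
  have h32 : √(3 / 2) = √3 / √2 := Real.sqrt_div zero_le_three 2
  have h6 : √6 = √3 * √2 := by rw [← Real.sqrt_mul zero_le_three]; norm_num
  have h2 : √2 ^ 2 = 2 := Real.sq_sqrt zero_le_two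
  have hc₀ : √(3 / 2) * (√6)⁻¹ = 1 / 2 := by rw [h32, h6]; field_simp; exact h2.symm
  have hc : √(3 / 2) * (√2)⁻¹ = √3 / 2 := by rw [h32]; field_simp; exact h2.symm
  simp only [iotaStar, iota0, iota1, iota2, e0m, e11m, e12m, e21m, e22m,
    frob_smul_vecMulVec_sub_smul, hc₀, hc, dotProduct, Matrix.mulVec, Matrix.trace_fin_three,
    Fin.sum_univ_three, Matrix.of_apply, Matrix.cons_val', Matrix.cons_val_zero,
    Matrix.cons_val_one, Matrix.cons_val, Matrix.cons_val_fin_one, ← Complex.mk_eq_add_mul_I]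
  ext1
  · simp only [veroneseForm_apply]
    ring
  · ext1 <;> apply Complex.ext <;>
    · simp only [veroneseForm_apply, planar_re, planar_im, Complex.smul_re, Complex.smul_im,
        Complex.add_re, Complex.add_im, Complex.mul_re, Complex.mul_im, smul_eq_mul]
      ring

lemma iotaStar_hedge (x : E3) : iotaStar (hedge x) = veronese x :=
  iotaStar_smul_vecMulVec_sub (‖x‖⁻¹ • x)

end Hopf

/-- Under ι*, the constant-norm hedgehog is the tangent map of the Veronese harmonic
sphere ω_{√3,√3}; consequently it is unstable with respect to S¹-equivariant
perturbations. -/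
theorem statement18 :
    (∀ x : E3, x ≠ 0 →
      iotaStar (hedge x) =
        omegaFam ((Real.sqrt 3 : ℝ) : ℂ) ((Real.sqrt 3 : ℝ) : ℂ) (‖x‖⁻¹ • x)) ∧
    (∃ X : E3 → V5, ContDiff ℝ (⊤ : ℕ∞) X ∧ HasCompactSupport X ∧
      (0 : E3) ∉ tsupport X ∧ EquivariantV X ∧
      secondVar (fun x => iotaStar (hedge x)) X < 0) := by
  refine ⟨fun x hx => ?_, ?_⟩
  · have hunit : ‖‖x‖⁻¹ • x‖ = 1 := by simpa using norm_smul_inv_norm (𝕜 := ℝ) hx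
    exact (iotaStar_hedge x).trans (omegaFam_sqrt_three hunit).symm
  · obtain ⟨φ, hφ, hsupp, hzero, hlt⟩ :=
      exists_integral_exp_mul_deriv_sq_lt (c := 3) (by norm_num)
    have hφ0 : φ 0 = 0 := image_eq_zero_of_notMem_tsupport hzero
    refine ⟨axialField φ, contDiff_axialField hφ hsupp hφ0, hasCompactSupport_axialField hsupp,
      zero_notMem_tsupport_axialField hsupp hφ0, equivariantV_axialField φ, ?_⟩
    have hball : 0 < volume.real (Metric.ball (0 : E3) 1) :=
      ENNReal.toReal_pos (Metric.measure_ball_pos volume 0 one_pos).ne' measure_ball_lt_top.ne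
    rw [funext iotaStar_hedge, secondVar_veronese_axialField (hφ.of_le (mod_cast le_top)) hsupp
      hzero]
    exact mul_neg_of_pos_of_neg (by positivity) (sub_neg.2 hlt)
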